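/- arXiv:2207.05574 — 4 statements merged into one kernel-verified Lean document; each statement's English description precedes it below -/
import Mathlib

section
/- Let M ∈ ℝ^{p×p} be symmetric with eigenvalues λ_1 ≥ ... ≥ λ_p and orthonormal eigenvectors v_1, ..., v_p, and let π(1), ..., π(u) be distinct indices in {1, ..., d} with the eigenvalues λ_{π(1)}, ..., λ_{π(u)} pairwise distinct. For each j define Δ_j = min{λ_{π(j)−1} − λ_{π(j)}, λ_{π(j)} − λ_{π(j)+1}} (with the conventions λ_0 = +∞ and λ_{p+1} = −∞) and Δ = min_{1≤j≤u} Δ_j, and assume Δ > 0. Let M̂ be symmetric with ‖M̂ − M‖_op ≤ ε, and let Γ = (v_{π(1)}, ..., v_{π(u)}) and Γ̂ = (v̂_{π(1)}, ..., v̂_{π(u)}), where v̂_i denotes a unit eigenvector of M̂ associated with its i-th largest eigenvalue. Then ‖sin Θ(Γ, Γ̂)‖_F ≤ 2√u ε / Δ. -/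
/-!
The squared Frobenius norm of `sin Θ` is `u - ‖ΓᵀΓ̂‖_F²`, because the squared singular values of
`ΓᵀΓ̂` sum to its squared Frobenius norm (`sum_sq_eq_of_isSingularValues`) and are at most one
(`le_one_of_isSingularValues`). Discarding the off-diagonal entries of `ΓᵀΓ̂` bounds this by
`∑ j, (1 - ⟪v_{π j}, v̂_{π j}⟫²)`, so it is enough to treat one eigenvector at a time.

For a single index `i`, the residual `(M - λ_i) v̂_i = (λ̂_i - λ_i) v̂_i + (M - M̂) v̂_i` has norm at
most `2 ε` by Weyl's inequality (`weyl_le`). Expanding the residual in the eigenbasis of `M`, the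
spectral gap shows that its squared norm is at least `Δ² (1 - ⟪v_i, v̂_i⟫²)` (`sin_sq_le`).
Summing the resulting bounds `(2 ε / Δ)²` over the `u` indices gives the claim.
-/

open Matrix BigOperators

noncomputable def l2norm {n : Type*} [Fintype n] (v : n → ℝ) : ℝ :=
  Real.sqrt (∑ i, v i ^ 2)

noncomputable def opNorm {m n : Type*} [Fintype m] [Fintype n] (A : Matrix m n ℝ) : ℝ :=
  sSup {c : ℝ | ∃ v : n → ℝ, l2norm v = 1 ∧ c = l2norm (A.mulVec v)}

/-- `s` is the (decreasingly ordered) family of singular values of the square matrix `A`. -/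
def IsSingularValues {u : ℕ} (A : Matrix (Fin u) (Fin u) ℝ) (s : Fin u → ℝ) : Prop :=
  Antitone s ∧ (∀ j, 0 ≤ s j) ∧
    ∃ O₁ O₂ : Matrix (Fin u) (Fin u) ℝ,
      O₁ * O₁ᵀ = 1 ∧ O₁ᵀ * O₁ = 1 ∧ O₂ * O₂ᵀ = 1 ∧ O₂ᵀ * O₂ = 1 ∧
      A = O₁ * Matrix.diagonal s * O₂

open scoped InnerProductSpace

lemma l2norm_eq_norm {n : Type*} [Fintype n] (x : n → ℝ) : l2norm x = ‖WithLp.toLp 2 x‖ := by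
  simp [l2norm, EuclideanSpace.norm_eq]

/-- The supremum defining `opNorm` is over a bounded set, so `opNorm A` really bounds the action
of `A` on Euclidean vectors. -/
lemma norm_toEuclideanLin_le {n : Type*} [Fintype n] [DecidableEq n] (A : Matrix n n ℝ)
    (x : EuclideanSpace ℝ n) : ‖Matrix.toEuclideanLin A x‖ ≤ opNorm A * ‖x‖ := by
  have hb : BddAbove {c : ℝ | ∃ v : n → ℝ, l2norm v = 1 ∧ c = l2norm (A.mulVec v)} := by
    refine ⟨‖LinearMap.toContinuousLinearMap (Matrix.toEuclideanLin A)‖, ?_⟩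
    rintro c ⟨v, hv, rfl⟩
    rw [l2norm_eq_norm] at hv ⊢
    have := (LinearMap.toContinuousLinearMap (Matrix.toEuclideanLin A)).le_opNorm
      (WithLp.toLp 2 v)
    rw [hv, mul_one] at this
    exact this
  rcases eq_or_ne x 0 with rfl | hx
  · simp
  have hx' : 0 < ‖x‖ := norm_pos_iff.mpr hx
  have h1 : ‖Matrix.toEuclideanLin A ((‖x‖)⁻¹ • x)‖ ≤ opNorm A := by
    refine le_csSup hb ⟨((‖x‖)⁻¹ • x).ofLp, ?_, ?_⟩
    · rw [l2norm_eq_norm]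
      change ‖(‖x‖)⁻¹ • x‖ = 1
      rw [norm_smul, norm_inv, norm_norm, inv_mul_cancel₀ hx'.ne']
    · rw [l2norm_eq_norm]
      rfl
  rw [map_smul, norm_smul, norm_inv, norm_norm, inv_mul_le_iff₀ hx'] at h1
  linarith

section Spectral

variable {E : Type*} [NormedAddCommGroup E] [InnerProductSpace ℝ E] {p : ℕ}

lemma inner_apply_eigenbasis (b : OrthonormalBasis (Fin p) ℝ E) (T : E →ₗ[ℝ] E)
    (lam : Fin p → ℝ) (hT : ∀ i, T (b i) = lam i • b i) (x : E) (k : Fin p) :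
    ⟪b k, T x⟫_ℝ = lam k * ⟪b k, x⟫_ℝ := by
  conv_lhs => rw [← b.sum_repr' x]
  simp [hT, inner_sum, inner_smul_right, b.inner_eq_ite, mul_comm]

lemma inner_apply_self_eq_sum (b : OrthonormalBasis (Fin p) ℝ E) (T : E →ₗ[ℝ] E)
    (lam : Fin p → ℝ) (hT : ∀ i, T (b i) = lam i • b i) (x : E) :
    ⟪x, T x⟫_ℝ = ∑ k, lam k * ⟪b k, x⟫_ℝ ^ 2 := by
  rw [← b.sum_inner_mul_inner]
  refine Finset.sum_congr rfl fun k _ => ?_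
  rw [inner_apply_eigenbasis b T lam hT, real_inner_comm]
  ring

lemma norm_sq_eq_sum (b : OrthonormalBasis (Fin p) ℝ E) (x : E) :
    ‖x‖ ^ 2 = ∑ k, ⟪b k, x⟫_ℝ ^ 2 := by
  rw [← real_inner_self_eq_norm_sq, ← b.sum_inner_mul_inner]
  refine Finset.sum_congr rfl fun k _ => ?_
  rw [real_inner_comm]
  ring

/-- One half of Weyl's inequality: the `i`-th largest eigenvalue moves by at most the size of the
perturbation. The test vector is orthogonal to the `b k` with `k > i` and the `c k` with `k < i`;
these are only `p - 1` conditions. -/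
lemma weyl_le (b c : OrthonormalBasis (Fin p) ℝ E) (T S : E →ₗ[ℝ] E)
    (lam μ : Fin p → ℝ) (hT : ∀ i, T (b i) = lam i • b i) (hS : ∀ i, S (c i) = μ i • c i)
    (hlam : Antitone lam) (hμ : Antitone μ) (ε : ℝ) (hε : ∀ x, ‖T x - S x‖ ≤ ε * ‖x‖)
    (i : Fin p) : lam i - μ i ≤ ε := by
  let L : E →ₗ[ℝ] ({k : Fin p // k ≠ i} → ℝ) := LinearMap.pi fun k =>
    if k.1 < i then (innerₛₗ ℝ (c k.1)) else (innerₛₗ ℝ (b k.1))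
  have hfin : FiniteDimensional ℝ E := b.toBasis.finiteDimensional_of_finite
  have hker : LinearMap.ker L ≠ ⊥ := by
    apply LinearMap.ker_ne_bot_of_finrank_lt
    rw [Module.finrank_eq_card_basis b.toBasis, Module.finrank_fintype_fun_eq_card,
      Fintype.card_subtype_compl]
    have := i.pos
    simp
    omega
  obtain ⟨x, hx, hx0⟩ := Submodule.exists_mem_ne_zero_of_ne_bot hker
  have hc : ∀ k, k < i → ⟪c k, x⟫_ℝ = 0 := fun k hk => by
    simpa [L, hk] using congrFun (LinearMap.mem_ker.mp hx) ⟨k, hk.ne⟩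
  have hb : ∀ k, i < k → ⟪b k, x⟫_ℝ = 0 := fun k hk => by
    simpa [L, hk.not_gt] using congrFun (LinearMap.mem_ker.mp hx) ⟨k, hk.ne'⟩
  have h1 : lam i * ‖x‖ ^ 2 ≤ ⟪x, T x⟫_ℝ := by
    rw [inner_apply_self_eq_sum b T lam hT, norm_sq_eq_sum b, Finset.mul_sum]
    refine Finset.sum_le_sum fun k _ => ?_
    rcases lt_or_ge i k with h | h
    · simp [hb k h]
    · exact mul_le_mul_of_nonneg_right (hlam h) (sq_nonneg _)
  have h2 : ⟪x, S x⟫_ℝ ≤ μ i * ‖x‖ ^ 2 := by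
    rw [inner_apply_self_eq_sum c S μ hS, norm_sq_eq_sum c, Finset.mul_sum]
    refine Finset.sum_le_sum fun k _ => ?_
    rcases lt_or_ge k i with h | h
    · simp [hc k h]
    · exact mul_le_mul_of_nonneg_right (hμ h) (sq_nonneg _)
  have h3 : ⟪x, T x⟫_ℝ - ⟪x, S x⟫_ℝ ≤ ε * ‖x‖ ^ 2 := by
    rw [← inner_sub_right]
    calc ⟪x, T x - S x⟫_ℝ ≤ ‖x‖ * ‖T x - S x‖ := real_inner_le_norm _ _
      _ ≤ ‖x‖ * (ε * ‖x‖) := by gcongr; exact hε x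
      _ = ε * ‖x‖ ^ 2 := by ring
  have hx' : 0 < ‖x‖ ^ 2 := by positivity
  refine le_of_mul_le_mul_right ?_ hx'
  linarith

/-- Davis–Kahan for a single eigenvector: if `lam i` is separated from the other eigenvalues of
`T` by at least `Δ`, then `Δ · sin ∠(b i, c i) ≤ ‖(T - lam i) (c i)‖ ≤ 2 ε`. -/
lemma sin_sq_le (b c : OrthonormalBasis (Fin p) ℝ E) (T S : E →ₗ[ℝ] E)
    (lam μ : Fin p → ℝ) (hT : ∀ i, T (b i) = lam i • b i) (hS : ∀ i, S (c i) = μ i • c i)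
    (hlam : Antitone lam) (hμ : Antitone μ) (ε : ℝ) (hε : ∀ x, ‖T x - S x‖ ≤ ε * ‖x‖)
    (Δ : ℝ) (hΔ : 0 < Δ) (i : Fin p) (hgap : ∀ k, k ≠ i → Δ ≤ |lam k - lam i|) :
    1 - ⟪b i, c i⟫_ℝ ^ 2 ≤ (2 * ε / Δ) ^ 2 := by
  have hW : |μ i - lam i| ≤ ε := by
    rw [abs_le]
    have h1 := weyl_le b c T S lam μ hT hS hlam hμ ε hε i
    have h2 := weyl_le c b S T μ lam hS hT hμ hlam ε
      (fun x => by rw [norm_sub_rev]; exact hε x) i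
    constructor <;> linarith
  have hci : ‖c i‖ = 1 := c.orthonormal.1 i
  have hup : ‖T (c i) - lam i • c i‖ ≤ 2 * ε := by
    have e : T (c i) - lam i • c i = (μ i - lam i) • c i + (T (c i) - S (c i)) := by
      rw [hS, sub_smul]; abel
    rw [e]
    refine (norm_add_le _ _).trans ?_
    have := hε (c i)
    rw [norm_smul, hci, Real.norm_eq_abs]
    rw [hci] at this
    linarith
  have hlow : Δ ^ 2 * (1 - ⟪b i, c i⟫_ℝ ^ 2) ≤ ‖T (c i) - lam i • c i‖ ^ 2 := by
    have e1 : 1 - ⟪b i, c i⟫_ℝ ^ 2 = ∑ k ∈ Finset.univ.erase i, ⟪b k, c i⟫_ℝ ^ 2 := by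
      have := norm_sq_eq_sum b (c i)
      rw [hci, ← Finset.add_sum_erase _ _ (Finset.mem_univ i)] at this
      linarith
    rw [norm_sq_eq_sum b, e1, Finset.mul_sum,
      ← Finset.add_sum_erase _ _ (Finset.mem_univ i)]
    refine le_add_of_nonneg_of_le (sq_nonneg _) (Finset.sum_le_sum fun k hk => ?_)
    rw [inner_sub_right, inner_apply_eigenbasis b T lam hT, inner_smul_right, ← sub_mul, mul_pow,
      ← sq_abs (lam k - lam i)]
    have := hgap k (Finset.ne_of_mem_erase hk)
    gcongr
  rw [div_pow, le_div_iff₀ (by positivity), mul_comm]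
  exact hlow.trans (by gcongr)

end Spectral

/-- The sum of the squares of the singular values is the squared Frobenius norm. -/
lemma sum_sq_eq_of_isSingularValues {u : ℕ} {A : Matrix (Fin u) (Fin u) ℝ} {s : Fin u → ℝ}
    (h : IsSingularValues A s) : ∑ j, s j ^ 2 = ∑ j, ∑ k, A k j ^ 2 := by
  obtain ⟨-, -, O₁, O₂, -, h1, h2, -, rfl⟩ := h
  set A := O₁ * Matrix.diagonal s * O₂ with hA
  have h3 : Aᵀ * A = O₂ᵀ * (Matrix.diagonal s * Matrix.diagonal s * O₂) := by
    rw [hA]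
    simp only [Matrix.transpose_mul, Matrix.diagonal_transpose, Matrix.mul_assoc]
    rw [← Matrix.mul_assoc O₁ᵀ, h1, Matrix.one_mul]
  have h4 : (Aᵀ * A).trace = ∑ j, s j ^ 2 := by
    rw [h3, Matrix.trace_mul_comm, Matrix.mul_assoc, h2]
    simp [Matrix.trace, pow_two]
  rw [← h4]
  simp [Matrix.trace, Matrix.mul_apply, pow_two]

/-- The cosines of the principal angles are at most one: after rotating the two orthonormal
families they become inner products of pairs of unit vectors. -/
lemma le_one_of_isSingularValues {p u : ℕ} {V W : Matrix (Fin p) (Fin u) ℝ} {s : Fin u → ℝ}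
    (hV : Vᵀ * V = 1) (hW : Wᵀ * W = 1) (h : IsSingularValues (Vᵀ * W) s) (j : Fin u) :
    s j ≤ 1 := by
  obtain ⟨-, -, O₁, O₂, -, h1, h2, -, hA⟩ := h
  have hX : (V * O₁)ᵀ * (V * O₁) = 1 := by
    rw [Matrix.transpose_mul, Matrix.mul_assoc, ← Matrix.mul_assoc Vᵀ, hV, Matrix.one_mul, h1]
  have hY : (W * O₂ᵀ)ᵀ * (W * O₂ᵀ) = 1 := by
    rw [Matrix.transpose_mul, Matrix.mul_assoc, ← Matrix.mul_assoc Wᵀ, hW, Matrix.one_mul,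
      Matrix.transpose_transpose, h2]
  have hXY : (V * O₁)ᵀ * (W * O₂ᵀ) = Matrix.diagonal s := by
    rw [Matrix.transpose_mul, Matrix.mul_assoc, ← Matrix.mul_assoc Vᵀ, hA, Matrix.mul_assoc,
      Matrix.mul_assoc, h2, Matrix.mul_one, ← Matrix.mul_assoc, h1, Matrix.one_mul]
  have x1 := congrFun (congrFun hX j) j
  have y1 := congrFun (congrFun hY j) j
  have xy := congrFun (congrFun hXY j) j
  rw [Matrix.mul_apply] at x1 y1 xy
  simp only [Matrix.transpose_apply _ j, Matrix.one_apply_eq, Matrix.diagonal_apply_eq]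
    at x1 y1 xy
  have : 2 * s j ≤ 1 + 1 := by
    nth_rw 1 [← x1]
    rw [← y1, ← xy, Finset.mul_sum, ← Finset.sum_add_distrib]
    refine Finset.sum_le_sum fun i _ => ?_
    nlinarith [sq_nonneg ((V * O₁) i j - (W * O₂ᵀ) i j)]
  linarith

lemma transpose_mul_apply_eq_inner {p u : ℕ} (v w : Fin u → EuclideanSpace ℝ (Fin p))
    (k j : Fin u) :
    ((Matrix.of fun (i : Fin p) (j : Fin u) => v j i)ᵀ *
      (Matrix.of fun (i : Fin p) (j : Fin u) => w j i)) k j = ⟪v k, w j⟫_ℝ := by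
  simp [Matrix.mul_apply, PiLp.inner_apply, mul_comm]

lemma transpose_mul_self_eq_one {p u : ℕ} {v : Fin u → EuclideanSpace ℝ (Fin p)}
    (hv : Orthonormal ℝ v) :
    (Matrix.of fun (i : Fin p) (j : Fin u) => v j i)ᵀ *
      (Matrix.of fun (i : Fin p) (j : Fin u) => v j i) = 1 := by
  ext k j
  rw [transpose_mul_apply_eq_inner, orthonormal_iff_ite.mp hv, Matrix.one_apply]

lemma exists_orthonormalBasis_eq {p : ℕ} {v : Fin p → EuclideanSpace ℝ (Fin p)}
    (hv : Orthonormal ℝ v) :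
    ∃ b : OrthonormalBasis (Fin p) ℝ (EuclideanSpace ℝ (Fin p)), ⇑b = v := by
  refine ⟨OrthonormalBasis.mk hv ?_, OrthonormalBasis.coe_mk _ _⟩
  rw [hv.linearIndependent.span_eq_top_of_card_eq_finrank' (by simp)]

/-- Lemma S2: a Davis–Kahan type bound
`‖sin Θ(Γ, Γ̂)‖_F ≤ 2 √u ε / Δ` for families of eigenvectors of `M` and of the perturbed
matrix `M̂`, selected by distinct indices `π(1), …, π(u)` in `{1, …, d}` whose eigenvalues are
pairwise distinct, where `Δ = min_j Δ_j` with
`Δ_j = min{λ_{π(j)−1} − λ_{π(j)}, λ_{π(j)} − λ_{π(j)+1}}` (conventions `λ₀ = +∞`,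
`λ_{p+1} = −∞`), and `‖M̂ − M‖_op ≤ ε`. -/
theorem stmt_3 {p d u : ℕ} (hd : d ≤ p) (hu : 1 ≤ u)
    (M Mh : Matrix (Fin p) (Fin p) ℝ) (hMsym : M.IsSymm) (hMhsym : Mh.IsSymm)
    (v : Fin p → EuclideanSpace ℝ (Fin p)) (lam : Fin p → ℝ)
    (hON : Orthonormal ℝ v)
    (hEig : ∀ i, M.mulVec (v i) = lam i • (v i))
    (hAnti : Antitone lam)
    (π : Fin u → Fin d) (hπ : Function.Injective π)
    (hDistinct : ∀ j k : Fin u, j ≠ k →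
      lam ⟨π j, lt_of_lt_of_le (π j).isLt hd⟩ ≠ lam ⟨π k, lt_of_lt_of_le (π k).isLt hd⟩)
    (Δ : ℝ) (hΔ : 0 < Δ)
    (hgapUp : ∀ j : Fin u, 0 < ((π j : ℕ)) →
      Δ ≤ lam ⟨(π j : ℕ) - 1, lt_of_le_of_lt (Nat.sub_le _ _) (lt_of_lt_of_le (π j).isLt hd)⟩
            - lam ⟨π j, lt_of_lt_of_le (π j).isLt hd⟩)
    (hgapDown : ∀ j : Fin u, ∀ h : (π j : ℕ) + 1 < p,
      Δ ≤ lam ⟨π j, lt_of_lt_of_le (π j).isLt hd⟩ - lam ⟨(π j : ℕ) + 1, h⟩)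
    (ε : ℝ) (hε : opNorm (Mh - M) ≤ ε)
    (w : Fin p → EuclideanSpace ℝ (Fin p)) (μ : Fin p → ℝ)
    (hONh : Orthonormal ℝ w)
    (hEigh : ∀ i, Mh.mulVec (w i) = μ i • (w i))
    (hAntih : Antitone μ)
    (s : Fin u → ℝ)
    (hs : IsSingularValues
      ((Matrix.of fun (i : Fin p) (j : Fin u) => v ⟨π j, lt_of_lt_of_le (π j).isLt hd⟩ i)ᵀ *
        (Matrix.of fun (i : Fin p) (j : Fin u) => w ⟨π j, lt_of_lt_of_le (π j).isLt hd⟩ i)) s) :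
    Real.sqrt (∑ j, (Real.sqrt (1 - s j ^ 2)) ^ 2) ≤ 2 * Real.sqrt u * ε / Δ := by
  obtain ⟨b, rfl⟩ := exists_orthonormalBasis_eq hON
  obtain ⟨c, rfl⟩ := exists_orthonormalBasis_eq hONh
  have hT : ∀ i, Matrix.toEuclideanLin M (b i) = lam i • b i := fun i => by
    ext x; exact congrFun (hEig i) x
  have hS : ∀ i, Matrix.toEuclideanLin Mh (c i) = μ i • c i := fun i => by
    ext x; exact congrFun (hEigh i) x
  have hE : ∀ x, ‖Matrix.toEuclideanLin M x - Matrix.toEuclideanLin Mh x‖ ≤ ε * ‖x‖ := fun x => by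
    rw [norm_sub_rev, ← LinearMap.sub_apply, ← map_sub]
    exact (norm_toEuclideanLin_le _ _).trans (by gcongr)
  let ι : Fin u → Fin p := fun j => ⟨π j, lt_of_lt_of_le (π j).isLt hd⟩
  have hι : Function.Injective ι := fun j k h => hπ (Fin.ext (Fin.mk.inj h))
  have hε0 : 0 ≤ ε := by
    have := (norm_nonneg _).trans (hE (b (ι ⟨0, hu⟩)))
    rwa [b.orthonormal.1, mul_one] at this
  have hgap : ∀ j k, k ≠ ι j → Δ ≤ |lam k - lam (ι j)| := fun j k hk => by
    rcases lt_or_gt_of_ne hk with h | h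
    · have h' : (k : ℕ) < π j := h
      have h1 := hgapUp j (by omega)
      have h2 := hAnti (show k ≤ ⟨(π j : ℕ) - 1, by omega⟩ from Fin.mk_le_mk.mpr (by omega))
      exact le_trans (by linarith) (le_abs_self (lam k - lam (ι j)))
    · have h' : (π j : ℕ) < k := h
      have h1 := hgapDown j (by omega)
      have h2 := hAnti (show ⟨(π j : ℕ) + 1, by omega⟩ ≤ k from Fin.mk_le_mk.mpr (by omega))
      exact le_trans (by linarith) (neg_le_abs (lam k - lam (ι j)))
  have hs1 := le_one_of_isSingularValues
    (transpose_mul_self_eq_one (b.orthonormal.comp ι hι))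
    (transpose_mul_self_eq_one (c.orthonormal.comp ι hι)) hs
  have hs0 := hs.2.1
  have hF := sum_sq_eq_of_isSingularValues hs
  have hdiag : ∑ j, ⟪b (ι j), c (ι j)⟫_ℝ ^ 2 ≤ ∑ j, s j ^ 2 := by
    -- Only the diagonal entries of `ΓᵀΓ̂` are kept.
    rw [hF]
    refine Finset.sum_le_sum fun j _ => ?_
    refine le_trans (le_of_eq ?_) (Finset.single_le_sum (fun k _ => sq_nonneg _)
      (Finset.mem_univ j))
    exact congrArg (· ^ 2)
      (transpose_mul_apply_eq_inner (fun j => b (ι j)) (fun j => c (ι j)) j j).symm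
  have hsum : ∑ j, (Real.sqrt (1 - s j ^ 2)) ^ 2 = ∑ j, (1 - s j ^ 2) :=
    Finset.sum_congr rfl fun j _ => Real.sq_sqrt (by nlinarith [hs1 j, hs0 j])
  have hbound : ∑ j, (1 - ⟪b (ι j), c (ι j)⟫_ℝ ^ 2) ≤ ∑ _j : Fin u, (2 * ε / Δ) ^ 2 :=
    Finset.sum_le_sum fun j _ => sin_sq_le b c _ _ lam μ hT hS hAnti hAntih ε hE Δ hΔ (ι j) (hgap j)
  rw [hsum]
  refine Real.sqrt_le_iff.mpr ⟨by positivity, ?_⟩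
  have hR : (2 * Real.sqrt u * ε / Δ) ^ 2 = u * (2 * ε / Δ) ^ 2 := by
    rw [show 2 * Real.sqrt u * ε / Δ = Real.sqrt u * (2 * ε / Δ) by ring, mul_pow,
      Real.sq_sqrt (Nat.cast_nonneg u)]
  rw [hR]
  rw [Finset.sum_sub_distrib] at hbound ⊢
  simp only [Finset.sum_const, Finset.card_univ, Fintype.card_fin, nsmul_eq_mul] at hbound ⊢
  linarith
end

section
/- Let U, Û ∈ ℝ^{p×p} be symmetric positive semidefinite with ‖Û − U‖_op ≤ ε, and set ν = ‖U‖_op. Let Δ > 0 with ε ≤ Δ/4, and let v, v̂ ∈ ℝ^p be unit vectors with v̂ᵀv ≥ 0 and sin Θ(v̂, v) ≤ 2ε/Δ. Then |v̂ᵀÛv̂ − vᵀUv| ≤ (1 + 10ν/Δ) ε. -/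
/-!
The difference splits as
`v̂ᵀÛv̂ - vᵀUv = v̂ᵀ(Û - U)v̂ + (v̂ - v)ᵀU(v̂ + v)`,
where the second term uses the symmetry of `U`. By `abs_dotProduct_mulVec_le` the first term is at
most `ε`, and the second at most `ν ‖v̂ - v‖ ‖v̂ + v‖`. For unit vectors
`‖v̂ - v‖² ‖v̂ + v‖² = (2 - 2c)(2 + 2c) = 4 (1 - c²)` with `c = v̂ᵀv`, so the product of the norms is
`2 sin Θ ≤ 4ε/Δ`. The resulting bound `(1 + 4ν/Δ) ε` is stronger than the claimed one.
-/

open Matrix BigOperators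

lemma l2norm_nonneg {n : Type*} [Fintype n] (v : n → ℝ) : 0 ≤ l2norm v :=
  Real.sqrt_nonneg _

lemma l2norm_sq {n : Type*} [Fintype n] (v : n → ℝ) : l2norm v ^ 2 = v ⬝ᵥ v := by
  rw [l2norm, Real.sq_sqrt (Finset.sum_nonneg fun i _ => sq_nonneg _)]
  simp [dotProduct, sq]

lemma l2norm_smul {n : Type*} [Fintype n] (a : ℝ) (v : n → ℝ) :
    l2norm (a • v) = |a| * l2norm v := by
  simp only [l2norm, Pi.smul_apply, smul_eq_mul, mul_pow]
  rw [← Finset.mul_sum, Real.sqrt_mul (sq_nonneg a), Real.sqrt_sq_eq_abs]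

lemma eq_zero_of_l2norm_eq_zero {n : Type*} [Fintype n] {v : n → ℝ} (h : l2norm v = 0) :
    v = 0 := by
  rw [← dotProduct_self_eq_zero, ← l2norm_sq, h]
  norm_num

lemma abs_dotProduct_le {n : Type*} [Fintype n] (x y : n → ℝ) :
    |x ⬝ᵥ y| ≤ l2norm x * l2norm y := by
  apply abs_le_of_sq_le_sq _ (mul_nonneg (l2norm_nonneg _) (l2norm_nonneg _))
  rw [mul_pow, l2norm_sq, l2norm_sq]
  simpa [dotProduct, sq] using Finset.sum_mul_sq_le_sq_mul_sq Finset.univ x y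

/-- The supremum defining `opNorm` is a genuine one: the Frobenius norm is an upper bound. -/
lemma bddAbove_opNorm_set {m n : Type*} [Fintype m] [Fintype n] (A : Matrix m n ℝ) :
    BddAbove {c : ℝ | ∃ v : n → ℝ, l2norm v = 1 ∧ c = l2norm (A.mulVec v)} := by
  refine ⟨Real.sqrt (∑ i, ∑ j, A i j ^ 2), ?_⟩
  rintro c ⟨v, hv, rfl⟩
  refine Real.sqrt_le_sqrt (Finset.sum_le_sum fun i _ => ?_)
  have h1 : ∑ j, v j ^ 2 = 1 := by
    have := l2norm_sq v
    rw [hv] at this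
    simpa [dotProduct, sq] using this.symm
  have h := Finset.sum_mul_sq_le_sq_mul_sq Finset.univ (A i) v
  rwa [h1, mul_one] at h

lemma opNorm_nonneg {m n : Type*} [Fintype m] [Fintype n] (A : Matrix m n ℝ) : 0 ≤ opNorm A := by
  apply Real.sSup_nonneg
  rintro c ⟨v, -, rfl⟩
  exact l2norm_nonneg _

lemma l2norm_mulVec_le {m n : Type*} [Fintype m] [Fintype n] (A : Matrix m n ℝ) (y : n → ℝ) :
    l2norm (A.mulVec y) ≤ opNorm A * l2norm y := by
  rcases (l2norm_nonneg y).eq_or_lt with h | h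
  · rw [eq_zero_of_l2norm_eq_zero h.symm]
    simp [l2norm]
  · have hu : l2norm ((l2norm y)⁻¹ • y) = 1 := by
      rw [l2norm_smul, abs_of_pos (inv_pos.2 h), inv_mul_cancel₀ h.ne']
    have hle : l2norm (A.mulVec ((l2norm y)⁻¹ • y)) ≤ opNorm A :=
      le_csSup (bddAbove_opNorm_set A) ⟨_, hu, rfl⟩
    rwa [mulVec_smul, l2norm_smul, abs_of_pos (inv_pos.2 h), inv_mul_le_iff₀ h, mul_comm] at hle

lemma abs_dotProduct_mulVec_le {m n : Type*} [Fintype m] [Fintype n] (A : Matrix m n ℝ)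
    (x : m → ℝ) (y : n → ℝ) :
    |x ⬝ᵥ A.mulVec y| ≤ opNorm A * (l2norm x * l2norm y) := by
  calc |x ⬝ᵥ A.mulVec y| ≤ l2norm x * l2norm (A.mulVec y) := abs_dotProduct_le _ _
    _ ≤ l2norm x * (opNorm A * l2norm y) :=
        mul_le_mul_of_nonneg_left (l2norm_mulVec_le A y) (l2norm_nonneg x)
    _ = _ := by ring

/-- For unit vectors at angle `Θ`, the diagonals of the rhombus they span have lengths
`2 sin (Θ/2)` and `2 cos (Θ/2)`, with product `2 sin Θ`. -/
lemma l2norm_sub_mul_l2norm_add {n : Type*} [Fintype n] {x y : n → ℝ}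
    (hx : l2norm x = 1) (hy : l2norm y = 1) :
    l2norm (x - y) * l2norm (x + y) = 2 * Real.sqrt (1 - (x ⬝ᵥ y) ^ 2) := by
  have hxx : x ⬝ᵥ x = 1 := by rw [← l2norm_sq, hx, one_pow]
  have hyy : y ⬝ᵥ y = 1 := by rw [← l2norm_sq, hy, one_pow]
  have hc : |x ⬝ᵥ y| ≤ 1 := by simpa [hx, hy] using abs_dotProduct_le x y
  have hc2 : 0 ≤ 1 - (x ⬝ᵥ y) ^ 2 := sub_nonneg.2 ((sq_le_one_iff_abs_le_one _).2 hc)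
  rw [← sq_eq_sq₀ (mul_nonneg (l2norm_nonneg _) (l2norm_nonneg _)) (by positivity),
    mul_pow, mul_pow, Real.sq_sqrt hc2, l2norm_sq, l2norm_sq]
  simp only [sub_dotProduct, dotProduct_sub, add_dotProduct, dotProduct_add, hxx, hyy,
    dotProduct_comm y x]
  ring

/-- Lemma S3, part 1: if `‖Û − U‖_op ≤ ε ≤ Δ/4` and
`sin Θ(v̂, v) = √(1 − (v̂ᵀv)²) ≤ 2ε/Δ` for unit vectors `v, v̂` with `v̂ᵀv ≥ 0`, then
`|v̂ᵀÛv̂ − vᵀUv| ≤ (1 + 10ν/Δ) ε` where `ν = ‖U‖_op`. -/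
theorem stmt_4 {p : ℕ} (U Uh : Matrix (Fin p) (Fin p) ℝ)
    (hUpsd : U.PosSemidef) (hUhpsd : Uh.PosSemidef)
    (ε : ℝ) (hop : opNorm (Uh - U) ≤ ε)
    (ν : ℝ) (hν : ν = opNorm U)
    (Δ : ℝ) (hΔ : 0 < Δ) (hεΔ : ε ≤ Δ / 4)
    (v vh : Fin p → ℝ) (hv : l2norm v = 1) (hvh : l2norm vh = 1)
    (hpos : 0 ≤ dotProduct vh v)
    (hsin : Real.sqrt (1 - (dotProduct vh v) ^ 2) ≤ 2 * ε / Δ) :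
    |dotProduct vh (Uh.mulVec vh) - dotProduct v (U.mulVec v)| ≤ (1 + 10 * ν / Δ) * ε := by
  have hν0 : 0 ≤ ν := hν ▸ opNorm_nonneg U
  have hs : 0 ≤ 2 * ε / Δ := (Real.sqrt_nonneg _).trans hsin
  have hsymm : v ⬝ᵥ U.mulVec vh = vh ⬝ᵥ U.mulVec v := by
    have hU : Uᵀ = U := by simpa using hUpsd.isHermitian.eq
    rw [dotProduct_mulVec, ← mulVec_transpose, hU, dotProduct_comm]
  have hsplit : vh ⬝ᵥ Uh.mulVec vh - v ⬝ᵥ U.mulVec v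
      = vh ⬝ᵥ (Uh - U).mulVec vh + (vh - v) ⬝ᵥ U.mulVec (vh + v) := by
    simp only [sub_mulVec, mulVec_add, sub_dotProduct, dotProduct_sub, dotProduct_add, hsymm]
    ring
  have h1 : |vh ⬝ᵥ (Uh - U).mulVec vh| ≤ ε := by
    have h := abs_dotProduct_mulVec_le (Uh - U) vh vh
    rw [hvh, mul_one, mul_one] at h
    exact h.trans hop
  have h2 : |(vh - v) ⬝ᵥ U.mulVec (vh + v)| ≤ ν * (2 * (2 * ε / Δ)) := by
    have h := abs_dotProduct_mulVec_le U (vh - v) (vh + v)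
    rw [l2norm_sub_mul_l2norm_add hvh hv, ← hν] at h
    exact h.trans (by gcongr)
  rw [hsplit]
  calc _ ≤ ε + ν * (2 * (2 * ε / Δ)) := (abs_add_le _ _).trans (add_le_add h1 h2)
    _ ≤ ε + ν * (5 * (2 * ε / Δ)) := by gcongr; norm_num
    _ = (1 + 10 * ν / Δ) * ε := by ring
end

section
/- Let M ∈ ℝ^{p×p} be symmetric positive semidefinite with spectral decomposition M = Σ_{i=1}^{p} λ_i v_i v_iᵀ, where λ_1 ≥ ... ≥ λ_p ≥ 0 and v_1, ..., v_p are orthonormal. Fix k and Δ > 0 with λ_k − λ_{k+1} ≥ Δ, and set M_k = Σ_{i=k}^{p} λ_i v_i v_iᵀ. Then for any w ∈ ℝ^p with ‖w‖₂ = 1, writing t = sin²Θ(w, v_k): (i) sin²Θ(w, v_k) ≤ (λ_k − wᵀM_k w)/Δ, equivalently wᵀM_k w ≤ λ_k − Δt; (ii) for every j ≠ k, (wᵀv_j)² ≤ 2t, equivalently sin²Θ(w, v_j) ≥ 1 − 2t; and (iii) wᵀMw ≥ λ_k(1 − t). -/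
/-!
Write `cᵢ = wᵀvᵢ`. A square matrix with orthonormal rows also has orthonormal columns, so
Parseval's identity `∑ᵢ cᵢ² = ‖w‖² = 1` holds, and `t = 1 - cₖ²` is the total weight `∑_{i ≠ k} cᵢ²`
off `vₖ`. The quadratic forms are the weighted sums `wᵀMw = ∑ᵢ λᵢcᵢ²` and
`wᵀMₖw = ∑_{i ≥ k} λᵢcᵢ²`. In the second sum every index other than `k` has `λᵢ ≤ λₖ - Δ`, and
`λₖ - Δ ≥ 0`, so it is at most `(λₖ - Δ) ∑ᵢ cᵢ² + Δcₖ² = λₖ - Δt`. The other two claims keep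
one or two nonnegative terms of a sum.
-/

open Matrix BigOperators

/-- Parseval's identity for an orthonormal family of full size. -/
lemma sum_dotProduct_sq {p : ℕ} (v : Fin p → (Fin p → ℝ))
    (hON : ∀ i j, dotProduct (v i) (v j) = if i = j then (1 : ℝ) else 0) (w : Fin p → ℝ) :
    ∑ i, (dotProduct w (v i)) ^ 2 = dotProduct w w := by
  have h1 : Matrix.of v * (Matrix.of v)ᵀ = 1 := by
    ext i j
    rw [Matrix.one_apply, ← hON i j]
    rfl
  have h2 : (Matrix.of v)ᵀ * Matrix.of v = 1 := mul_eq_one_comm.mp h1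
  have h3 : ∑ i, (dotProduct w (v i)) ^ 2
      = dotProduct (Matrix.of v *ᵥ w) (Matrix.of v *ᵥ w) := by
    refine Finset.sum_congr rfl fun i _ => ?_
    rw [dotProduct_comm, sq]
    rfl
  rw [h3, Matrix.dotProduct_mulVec, Matrix.vecMul_mulVec, h2, Matrix.vecMul_one]

lemma quadForm_sum_vecMulVec {p : ℕ} (s : Finset (Fin p)) (v : Fin p → (Fin p → ℝ))
    (lam : Fin p → ℝ) (w : Fin p → ℝ) :
    dotProduct w ((∑ i ∈ s, lam i • Matrix.vecMulVec (v i) (v i)).mulVec w)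
      = ∑ i ∈ s, lam i * (dotProduct w (v i)) ^ 2 := by
  rw [Matrix.sum_mulVec, dotProduct_sum]
  refine Finset.sum_congr rfl fun i _ => ?_
  rw [Matrix.smul_mulVec, dotProduct_smul, Matrix.vecMulVec_mulVec, dotProduct_smul,
    dotProduct_comm (v i) w]
  simp [sq]

/-- Lemma S4: with `M = ∑ᵢ λᵢ vᵢvᵢᵀ`, `λ_k − λ_{k+1} ≥ Δ > 0` and
`M_k = ∑_{i≥k} λᵢ vᵢvᵢᵀ`, for any unit `w`, writing `t = sin²Θ(w, v_k) = 1 − (wᵀv_k)²`: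
(i) `t ≤ (λ_k − wᵀM_k w)/Δ` (equivalently `wᵀM_k w ≤ λ_k − Δt`);
(ii) `(wᵀv_j)² ≤ 2t` (equivalently `sin²Θ(w, v_j) ≥ 1 − 2t`) for all `j ≠ k`;
(iii) `wᵀMw ≥ λ_k(1 − t)`. -/
theorem stmt_6 {p : ℕ} (M : Matrix (Fin p) (Fin p) ℝ)
    (v : Fin p → (Fin p → ℝ)) (lam : Fin p → ℝ)
    (hM : M = ∑ i, lam i • Matrix.vecMulVec (v i) (v i))
    (hON : ∀ i j, dotProduct (v i) (v j) = if i = j then (1 : ℝ) else 0)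
    (hAnti : Antitone lam) (hNonneg : ∀ i, 0 ≤ lam i)
    (k : Fin p) (hk : (k : ℕ) + 1 < p)
    (Δ : ℝ) (hΔ : 0 < Δ) (hgap : Δ ≤ lam k - lam ⟨(k : ℕ) + 1, hk⟩)
    (Mk : Matrix (Fin p) (Fin p) ℝ)
    (hMk : Mk = ∑ i ∈ Finset.univ.filter (fun i : Fin p => k ≤ i),
      lam i • Matrix.vecMulVec (v i) (v i))
    (w : Fin p → ℝ) (hw : l2norm w = 1)
    (t : ℝ) (ht : t = 1 - (dotProduct w (v k)) ^ 2) :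
    (t ≤ (lam k - dotProduct w (Mk.mulVec w)) / Δ ∧
      dotProduct w (Mk.mulVec w) ≤ lam k - Δ * t) ∧
    (∀ j : Fin p, j ≠ k →
      (dotProduct w (v j)) ^ 2 ≤ 2 * t ∧ 1 - 2 * t ≤ 1 - (dotProduct w (v j)) ^ 2) ∧
    lam k * (1 - t) ≤ dotProduct w (M.mulVec w) := by
  have hww : dotProduct w w = 1 := by
    have h : ∑ i, w i ^ 2 = 1 := Real.sqrt_eq_one.mp hw
    rw [← h]
    exact Finset.sum_congr rfl fun i _ => (sq (w i)).symm
  have hP : ∑ i, (dotProduct w (v i)) ^ 2 = 1 := (sum_dotProduct_sq v hON w).trans hww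
  have hMkw := quadForm_sum_vecMulVec (Finset.univ.filter (fun i : Fin p => k ≤ i)) v lam w
  have hMw := quadForm_sum_vecMulVec Finset.univ v lam w
  rw [← hMk] at hMkw
  rw [← hM] at hMw
  have hnn : 0 ≤ lam k - Δ := by linarith [hNonneg ⟨(k : ℕ) + 1, hk⟩]
  have hupper : dotProduct w (Mk.mulVec w) ≤ lam k - Δ * t := by
    have hsum : ∑ i, (if k ≤ i then lam i * (dotProduct w (v i)) ^ 2 else 0)
        ≤ ∑ i, ((lam k - Δ) * (dotProduct w (v i)) ^ 2
          + if i = k then Δ * (dotProduct w (v i)) ^ 2 else 0) := by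
      refine Finset.sum_le_sum fun i _ => ?_
      have hsq := sq_nonneg (dotProduct w (v i))
      by_cases hik : i = k
      · subst hik
        simp only [le_refl, if_true]
        linarith
      · rw [if_neg hik, add_zero]
        split_ifs with hki
        · have hlt : k < i := lt_of_le_of_ne hki (Ne.symm hik)
          have hle : lam i ≤ lam ⟨(k : ℕ) + 1, hk⟩ := hAnti (Fin.mk_le_of_le_val hlt)
          exact mul_le_mul_of_nonneg_right (by linarith) hsq
        · positivity
    rw [Finset.sum_add_distrib, ← Finset.mul_sum, hP, Finset.sum_ite_eq' Finset.univ k,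
      if_pos (Finset.mem_univ k)] at hsum
    rw [hMkw, Finset.sum_filter, ht]
    linarith
  refine ⟨⟨?_, hupper⟩, fun j hj => ?_, ?_⟩
  · rw [le_div_iff₀ hΔ]
    linarith
  · have hpair : (dotProduct w (v j)) ^ 2 + (dotProduct w (v k)) ^ 2 ≤ 1 := by
      rw [← hP, ← Finset.sum_pair (f := fun i => (dotProduct w (v i)) ^ 2) hj]
      exact Finset.sum_le_sum_of_subset_of_nonneg (Finset.subset_univ _)
        fun i _ _ => sq_nonneg _
    have := sq_nonneg (dotProduct w (v j))
    constructor <;> linarith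
  · have hle := Finset.single_le_sum (f := fun i => lam i * (dotProduct w (v i)) ^ 2)
      (fun i _ => mul_nonneg (hNonneg i) (sq_nonneg _)) (Finset.mem_univ k)
    rw [hMw, ht, sub_sub_cancel]
    exact hle
end

section
/- Let M ∈ ℝ^{p×p} be symmetric positive semidefinite whose d largest eigenvalues λ_1 > ... > λ_d > λ_{d+1} ≥ ... ≥ λ_p ≥ 0 are distinct, with minimal eigen-gap Δ = min_{1≤j≤d}(λ_j − λ_{j+1}) > 0 and orthonormal eigenvectors v_1, ..., v_d; set τ₀ = max_{1≤k≤d} ‖v_k‖₁. Then there exists a constant c₀ > 0, depending only on d, λ_1, and Δ (in particular not on n, p, ε, τ, or M̂), such that for every ε > 0, every τ > τ₀, and every symmetric positive semidefinite M̂ with ‖M̂ − M‖_max ≤ ε, the PMD vectors v̂_1, ..., v̂_d computed from M̂ with ℓ1-bound τ satisfy sin²Θ(v̂_k, v_k) ≤ c₀ ε τ² for all k = 1, ..., d. -/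
/-!
Let `δ ^ 2 = ε τ ^ 2`. The form of the `k`-th deflated matrix is `x ↦ q̂ (T x)`, where `q̂` is the
form of `M̂` and `T` is the product of the deflation maps `x ↦ x - ⟪v̂ⱼ, x⟫ v̂ⱼ` for the earlier `v̂ⱼ`.
Each of these maps adds at most `τ` to the `ℓ1` norm of a vector in the unit ball, so on feasible
vectors replacing `M̂` by `M` costs only `O(δ ^ 2)`. Since `vₖ` is feasible, `v̂ₖ` therefore maximizes
`x ↦ q (T x)` up to `O(δ ^ 2)`, where `q` is the form of `M`.

Let `T₀` be the same product for the true eigenvectors; inductively `‖T - T₀‖ = O(δ)`. A direct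
comparison of `q ∘ T` with `q ∘ T₀` would only give `sin² = O(δ)`. Instead
(`curvature_step`), the difference of these two forms changes between `vₖ` and `± v̂ₖ` by at most
`O(δ) ‖± v̂ₖ - vₖ‖`, while by the eigengap `q ∘ T₀` drops by at least `Δ / 2 * ‖± v̂ₖ - vₖ‖ ^ 2`
(`gap_growth`). Hence `‖± v̂ₖ - vₖ‖ = O(δ)`. This bounds the error of the next deflation map, which
does not depend on the sign (`norm_defl_sub_le`), so the induction continues
(`deflation_perturbation`). Finally the squared sine of the angle is at most the squared distance
from `vₖ` to any multiple of `v̂ₖ` (`sin_sq_le`), with no lower bound on `‖v̂ₖ‖` needed, and it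
is `O(δ ^ 2) = O(ε τ ^ 2)`.
-/

open Matrix BigOperators

def l1norm {n : Type*} [Fintype n] (v : n → ℝ) : ℝ := ∑ i, |v i|

noncomputable def maxNorm {m n : Type*} [Fintype m] [Fintype n] (A : Matrix m n ℝ) : ℝ :=
  ⨆ i, ⨆ j, |A i j|

/-- The sequence of deflated matrices of the PMD algorithm:
`M̂_1 = M̂` and `M̂_{k+1} = (I − v̂_k v̂_kᵀ) M̂_k (I − v̂_k v̂_kᵀ)` (0-indexed here). -/
noncomputable def deflate {p : ℕ} (Mh : Matrix (Fin p) (Fin p) ℝ)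
    (vh : ℕ → (Fin p → ℝ)) : ℕ → Matrix (Fin p) (Fin p) ℝ
  | 0 => Mh
  | k + 1 => (1 - Matrix.vecMulVec (vh k) (vh k)) * deflate Mh vh k *
      (1 - Matrix.vecMulVec (vh k) (vh k))

/-- `vh 0, …, vh (d−1)` are PMD vectors computed from `M̂` with ℓ1-bound `τ`:
each `vh k` maximizes `vᵀ M̂_k v` subject to `‖v‖₁ ≤ τ` and `‖v‖₂ ≤ 1`. -/
def IsPMD {p : ℕ} (Mh : Matrix (Fin p) (Fin p) ℝ) (τ : ℝ) (d : ℕ)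
    (vh : ℕ → (Fin p → ℝ)) : Prop :=
  ∀ k < d, l1norm (vh k) ≤ τ ∧ l2norm (vh k) ≤ 1 ∧
    ∀ w : Fin p → ℝ, l1norm w ≤ τ → l2norm w ≤ 1 →
      dotProduct w ((deflate Mh vh k).mulVec w) ≤
        dotProduct (vh k) ((deflate Mh vh k).mulVec (vh k))

open scoped RealInnerProductSpace

/-! ### Deflation maps and the one-step estimate -/

/-- The linear map `x ↦ x - ⟪a, x⟫ a`; for a unit vector `a` it is the orthogonal projection onto
the complement of `a`. -/
noncomputable def defl {E : Type*} [NormedAddCommGroup E] [InnerProductSpace ℝ E] (a : E) :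
    E →ₗ[ℝ] E :=
  LinearMap.id - (innerₗ E a).smulRight a

/-- The composition `defl (a 0) ∘ ⋯ ∘ defl (a (k - 1))`. -/
noncomputable def deflSeq {E : Type*} [NormedAddCommGroup E] [InnerProductSpace ℝ E] (a : ℕ → E) :
    ℕ → E →ₗ[ℝ] E
  | 0 => LinearMap.id
  | k + 1 => deflSeq a k ∘ₗ defl (a k)

section
variable {E : Type*} [NormedAddCommGroup E] [InnerProductSpace ℝ E]

lemma defl_apply (a x : E) : defl a x = x - ⟪a, x⟫ • a := by
  simp [defl]

lemma norm_defl_le {a : E} (ha : ‖a‖ ≤ 1) (x : E) : ‖defl a x‖ ≤ ‖x‖ := by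
  rw [defl_apply]
  apply le_of_sq_le_sq _ (norm_nonneg x)
  rw [norm_sub_sq_real, inner_smul_right, norm_smul, real_inner_comm a x, mul_pow,
    Real.norm_eq_abs, sq_abs]
  have : ‖a‖ ^ 2 ≤ 1 := pow_le_one₀ (norm_nonneg _) ha
  nlinarith [sq_nonneg ⟪a, x⟫]

lemma norm_deflSeq_le {a : ℕ → E} {k : ℕ} (ha : ∀ j < k, ‖a j‖ ≤ 1) (x : E) :
    ‖deflSeq a k x‖ ≤ ‖x‖ := by
  induction k generalizing x with
  | zero => simp [deflSeq]
  | succ k ih =>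
    exact (ih (fun j hj => ha j (by omega)) _).trans (norm_defl_le (ha k (by omega)) x)

/-- Deflation maps are insensitive to the sign `s` of their vector, so closeness of directions is
enough to compare them. -/
lemma norm_defl_sub_le {a u : E} {s : ℝ} (hs : s ^ 2 = 1) (ha : ‖a‖ ≤ 1) (hu : ‖u‖ ≤ 1) (x : E) :
    ‖defl a x - defl u x‖ ≤ 2 * ‖s • a - u‖ * ‖x‖ := by
  have h : defl a x - defl u x = -(⟪s • a - u, x⟫ • (s • a) + ⟪u, x⟫ • (s • a - u)) := by
    simp only [defl_apply, inner_sub_left, real_inner_smul_left]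
    have : ⟪a, x⟫ • a = (s * ⟪a, x⟫) • (s • a) := by
      rw [smul_smul, show s * ⟪a, x⟫ * s = s ^ 2 * ⟪a, x⟫ by ring, hs, one_mul]
    rw [this]
    module
  have hsa : ‖s • a‖ ≤ 1 := by
    have : ‖s‖ = 1 := by
      rw [Real.norm_eq_abs]; exact (sq_eq_sq₀ (abs_nonneg s) zero_le_one).mp (by simpa using hs)
    rw [norm_smul, this, one_mul]; exact ha
  rw [h, norm_neg]
  refine (norm_add_le _ _).trans ?_
  rw [norm_smul _ (s • a), norm_smul _ (s • a - u)]
  have h1 := norm_inner_le_norm (𝕜 := ℝ) (s • a - u) x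
  have h2 := norm_inner_le_norm (𝕜 := ℝ) u x
  have h0 := norm_nonneg (s • a - u)
  have hx := norm_nonneg x
  have h3 : ‖⟪s • a - u, x⟫‖ * ‖s • a‖ ≤ ‖s • a - u‖ * ‖x‖ * 1 := by gcongr
  have h4 : ‖⟪u, x⟫‖ * ‖s • a - u‖ ≤ 1 * ‖x‖ * ‖s • a - u‖ := by
    gcongr; exact h2.trans (by gcongr)
  linarith

/-- Curvature argument: if `w` nearly maximizes the form of `T* S T`, while `u` maximizes the form
of `T₀* S T₀` with quadratic growth `Δ`, then the distance of `w` from `u` is controlled, up to the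
slack `N`, by the operator distance `η` of `T` and `T₀`. The difference of the two forms enters
only through its increment from `u` to `w`, which supplies the factor `‖w - u‖` of the last
term. -/
lemma curvature_step (S T T₀ : E →ₗ[ℝ] E) (hS : S.IsSymmetric) {L η N Δ : ℝ} (hL0 : 0 ≤ L)
    (hη : 0 ≤ η) (hΔ : 0 ≤ Δ) (hL : ∀ x, ‖S x‖ ≤ L * ‖x‖) (hT : ∀ x, ‖T x‖ ≤ ‖x‖)
    (hT₀ : ∀ x, ‖T₀ x‖ ≤ ‖x‖) (hTT : ∀ x, ‖T x - T₀ x‖ ≤ η * ‖x‖) {u w : E} (hu : ‖u‖ = 1)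
    (hw : ‖w‖ ≤ 1) (huw : 0 ≤ ⟪u, w⟫) (hmax : ⟪T u, S (T u)⟫ ≤ ⟪T w, S (T w)⟫ + N)
    (hgap : ⟪T₀ w, S (T₀ w)⟫ + Δ * (1 - ⟪u, w⟫ ^ 2) ≤ ⟪T₀ u, S (T₀ u)⟫) :
    Δ * ‖w - u‖ ^ 2 ≤ 2 * N + 8 * L * η * ‖w - u‖ := by
  have ha1 : ⟪u, w⟫ ≤ 1 := by
    have := real_inner_le_norm u w
    rw [hu, one_mul] at this
    linarith
  have hB : ∀ x y, ⟪T x, S (T y)⟫ - ⟪T₀ x, S (T₀ y)⟫ ≤ 2 * L * η * ‖x‖ * ‖y‖ := by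
    intro x y
    have e : ⟪T x, S (T y)⟫ - ⟪T₀ x, S (T₀ y)⟫
        = ⟪T x - T₀ x, S (T y)⟫ + ⟪T₀ x, S (T y - T₀ y)⟫ := by
      rw [map_sub, inner_sub_left, inner_sub_right]; ring
    have h1 : ⟪T x - T₀ x, S (T y)⟫ ≤ (η * ‖x‖) * (L * ‖y‖) := by
      refine (real_inner_le_norm _ _).trans ?_
      gcongr
      · exact hTT x
      · exact (hL _).trans (by gcongr; exact hT y)
    have h2 : ⟪T₀ x, S (T y - T₀ y)⟫ ≤ ‖x‖ * (L * (η * ‖y‖)) := by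
      refine (real_inner_le_norm _ _).trans ?_
      gcongr
      · exact hT₀ x
      · exact (hL _).trans (by gcongr; exact hTT y)
    rw [e]; linarith
  have hsym : ∀ R : E →ₗ[ℝ] E, ⟪R w, S (R w)⟫ - ⟪R u, S (R u)⟫
      = ⟪R (w - u), S (R (w + u))⟫ := by
    intro R
    simp only [map_sub, map_add, inner_sub_left, inner_add_right]
    have : ⟪R w, S (R u)⟫ = ⟪R u, S (R w)⟫ := by rw [← hS, real_inner_comm]
    linarith
  have h1 := hsym T
  have h2 := hsym T₀
  have h3 := hB (w - u) (w + u)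
  have h4 : ‖w + u‖ ≤ 2 := (norm_add_le _ _).trans (by linarith)
  have h5 : 2 * L * η * ‖w - u‖ * ‖w + u‖ ≤ 2 * L * η * ‖w - u‖ * 2 := by gcongr
  have h6 : ‖w - u‖ ^ 2 ≤ 2 * (1 - ⟪u, w⟫ ^ 2) := by
    rw [norm_sub_sq_real, hu, real_inner_comm]
    have : ‖w‖ ^ 2 ≤ 1 := pow_le_one₀ (norm_nonneg _) hw
    nlinarith
  have h7 := mul_le_mul_of_nonneg_left h6 hΔ
  linarith

/-- The junk value `0 / 0 = 0` makes this true for `a = 0` as well. -/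
lemma sin_sq_le_s10 {a u : E} (hu : ‖u‖ = 1) (s : ℝ) :
    1 - ⟪a, u⟫ ^ 2 / ‖a‖ ^ 2 ≤ ‖s • a - u‖ ^ 2 := by
  rw [norm_sub_sq_real, hu, norm_smul, mul_pow, Real.norm_eq_abs, sq_abs, real_inner_smul_left]
  by_cases h : a = 0
  · simp [h]
  · have : 0 < ‖a‖ := norm_pos_iff.mpr h
    have : 0 ≤ (s * ‖a‖ - ⟪a, u⟫ / ‖a‖) ^ 2 := sq_nonneg _
    have e : (s * ‖a‖ - ⟪a, u⟫ / ‖a‖) ^ 2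
        = s ^ 2 * ‖a‖ ^ 2 - 2 * (s * ⟪a, u⟫) + ⟪a, u⟫ ^ 2 / ‖a‖ ^ 2 := by
      have : ‖a‖ ≠ 0 := norm_ne_zero_iff.mpr h
      field_simp
      ring
    linarith

end

/-! ### Constants -/

/-- Bound for `‖±v̂ₖ - vₖ‖ / δ` when the first `k` deflation maps are off by `D * δ` and the near
maximality of `v̂ₖ` has slack `N * δ ^ 2`. -/
noncomputable def dirConst (Δ L N D : ℝ) : ℝ := √(4 * N / Δ + (8 * L * D / Δ) ^ 2)

/-- Accumulated error, in units of `δ`, of the product of the first `k` deflation maps. -/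
noncomputable def opConst (Δ L N : ℝ) : ℕ → ℝ
  | 0 => 0
  | k + 1 => opConst Δ L N k + 2 * dirConst Δ L N (opConst Δ L N k)

lemma opConst_nonneg (Δ L N : ℝ) (k : ℕ) : 0 ≤ opConst Δ L N k := by
  induction k with
  | zero => simp [opConst]
  | succ k ih => simp only [opConst, dirConst]; positivity

lemma le_dirConst {Δ L N D δ x : ℝ} (hΔ : 0 < Δ) (hδ : 0 ≤ δ) (hN : 0 ≤ N)
    (h : Δ * x ^ 2 ≤ 2 * (N * δ ^ 2) + 8 * L * (D * δ) * x) : x ≤ dirConst Δ L N D * δ := by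
  have h1 : x ^ 2 ≤ 2 * N / Δ * δ ^ 2 + 8 * L * D / Δ * δ * x := by
    have : 2 * N / Δ * δ ^ 2 + 8 * L * D / Δ * δ * x
        = (2 * (N * δ ^ 2) + 8 * L * (D * δ) * x) / Δ := by field_simp
    rw [this, le_div_iff₀ hΔ]; linarith
  set B := 8 * L * D / Δ
  have h2 : x ^ 2 ≤ (dirConst Δ L N D * δ) ^ 2 := by
    rw [mul_pow, dirConst, Real.sq_sqrt (by positivity)]
    have e : 4 * N / Δ = 2 * (2 * N / Δ) := by ring
    rw [e]
    nlinarith [sq_nonneg (x - B * δ)]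
  exact le_of_sq_le_sq h2 (by unfold dirConst; positivity)

/-- Extension of a family indexed by `Fin p` to `ℕ` by zero. -/
noncomputable def extZero {E : Type*} [Zero E] {p : ℕ} (b : Fin p → E) (k : ℕ) : E :=
  if h : k < p then b ⟨k, h⟩ else 0

/-! ### Eigenbasis and induction over the deflation steps -/

section
variable {E : Type*} [NormedAddCommGroup E] [InnerProductSpace ℝ E] {p : ℕ}
  (b : OrthonormalBasis (Fin p) ℝ E)

lemma norm_extZero_le (k : ℕ) : ‖extZero b k‖ ≤ 1 := by
  unfold extZero; split_ifs <;> simp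

lemma inner_deflSeq (k : ℕ) (hk : k ≤ p) (j : Fin p) (x : E) :
    ⟪b j, deflSeq (extZero b) k x⟫ = if (j : ℕ) < k then 0 else ⟪b j, x⟫ := by
  induction k generalizing x with
  | zero => simp [deflSeq]
  | succ k ih =>
    have hkp : k < p := by omega
    simp only [deflSeq, LinearMap.comp_apply]
    rw [ih (by omega), defl_apply, inner_sub_right, inner_smul_right]
    simp only [extZero, hkp, dif_pos, b.inner_eq_ite]
    by_cases h1 : (j : ℕ) < k
    · simp [h1, h1.trans (Nat.lt_succ_self k)]
    · by_cases h2 : (j : ℕ) = k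
      · have : j = ⟨k, hkp⟩ := Fin.ext h2
        simp [this]
      · have h3 : ¬ (j : ℕ) < k + 1 := by omega
        have h4 : j ≠ ⟨k, hkp⟩ := fun h => h2 (by rw [h])
        simp [h1, h3, h4]

lemma inner_basis_map {S : E →ₗ[ℝ] E} (hS : S.IsSymmetric) {lam : Fin p → ℝ}
    (hb : ∀ i, S (b i) = lam i • b i)
    (i : Fin p) (x : E) : ⟪b i, S x⟫ = lam i * ⟪b i, x⟫ := by
  rw [← hS, hb, real_inner_smul_left]

lemma quad_eq {S : E →ₗ[ℝ] E} (hS : S.IsSymmetric) {lam : Fin p → ℝ}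
    (hb : ∀ i, S (b i) = lam i • b i)
    (x : E) : ⟪x, S x⟫ = ∑ i, lam i * ⟪b i, x⟫ ^ 2 := by
  rw [← b.sum_inner_mul_inner x (S x)]
  refine Finset.sum_congr rfl fun i _ => ?_
  rw [inner_basis_map b hS hb, real_inner_comm]; ring

lemma norm_map_le {S : E →ₗ[ℝ] E} (hS : S.IsSymmetric) {lam : Fin p → ℝ}
    (hb : ∀ i, S (b i) = lam i • b i)
    {L : ℝ} (hL : ∀ i, lam i ≤ L) (hlam : ∀ i, 0 ≤ lam i) (hL0 : 0 ≤ L) (x : E) :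
    ‖S x‖ ≤ L * ‖x‖ := by
  apply le_of_sq_le_sq _ (by positivity)
  rw [mul_pow, ← b.sum_sq_inner_right, ← b.sum_sq_inner_right x, Finset.mul_sum]
  refine Finset.sum_le_sum fun i _ => ?_
  rw [inner_basis_map b hS hb, mul_pow]
  have := hL i
  have := hlam i
  gcongr

/-- Quadratic growth at `b k` of the quadratic form of `S` compressed to the complement of the
first `k` eigenvectors. -/
lemma gap_growth {S : E →ₗ[ℝ] E} (hS : S.IsSymmetric) {lam : Fin p → ℝ}
    (hb : ∀ i, S (b i) = lam i • b i)
    (hanti : Antitone lam) (hlam : ∀ i, 0 ≤ lam i) {Δ : ℝ} (k : ℕ) (hk : k + 1 < p)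
    (hgap : Δ ≤ lam ⟨k, by omega⟩ - lam ⟨k + 1, hk⟩) {w : E} (hw : ‖w‖ ≤ 1) :
    ⟪deflSeq (extZero b) k w, S (deflSeq (extZero b) k w)⟫
        + Δ * (1 - ⟪b ⟨k, by omega⟩, w⟫ ^ 2)
      ≤ ⟪deflSeq (extZero b) k (b ⟨k, by omega⟩),
          S (deflSeq (extZero b) k (b ⟨k, by omega⟩))⟫ := by
  set u := b ⟨k, by omega⟩ with hu
  set l0 := lam ⟨k, by omega⟩ with hl0
  set l1 := lam ⟨k + 1, hk⟩ with hl1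
  have ha : ⟪u, w⟫ ^ 2 ≤ 1 := by
    have := abs_real_inner_le_norm u w
    rw [hu, b.norm_eq_one, one_mul] at this
    rw [← sq_abs]
    exact pow_le_one₀ (abs_nonneg _) (this.trans hw)
  have hu2 : ⟪deflSeq (extZero b) k u, S (deflSeq (extZero b) k u)⟫ = l0 := by
    rw [quad_eq b hS hb, Finset.sum_eq_single (⟨k, by omega⟩ : Fin p)]
    · rw [inner_deflSeq b k (by omega), hu, b.inner_eq_ite]; simp [hl0]
    · intro j _ hj
      rw [inner_deflSeq b k (by omega), hu, b.inner_eq_ite]; simp [hj]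
    · simp
  have hw2 : ⟪deflSeq (extZero b) k w, S (deflSeq (extZero b) k w)⟫
      ≤ l1 + (l0 - l1) * ⟪u, w⟫ ^ 2 := by
    calc _ = ∑ i, lam i * ⟪b i, deflSeq (extZero b) k w⟫ ^ 2 := quad_eq b hS hb _
      _ ≤ ∑ i, (l1 * ⟪b i, w⟫ ^ 2
            + if i = ⟨k, by omega⟩ then (l0 - l1) * ⟪u, w⟫ ^ 2 else 0) := by
        refine Finset.sum_le_sum fun i _ => ?_
        rw [inner_deflSeq b k (by omega)]
        have h1 : 0 ≤ l1 := hlam _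
        rcases lt_trichotomy (i : ℕ) k with h | h | h
        · have : i ≠ ⟨k, by omega⟩ := fun e => by rw [e] at h; simp at h
          simp only [h, this, if_true, if_false]
          have : 0 ≤ l1 * ⟪b i, w⟫ ^ 2 := by positivity
          linarith
        · have : i = ⟨k, by omega⟩ := Fin.ext h
          rw [if_neg (by omega), if_pos this, this, ← hu, ← hl0]
          linarith
        · have : i ≠ ⟨k, by omega⟩ := fun e => by rw [e] at h; simp at h
          rw [if_neg (by omega), if_neg this, add_zero]
          have : lam i ≤ l1 := hanti (by rw [Fin.le_def]; exact h)
          gcongr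
      _ = l1 * ‖w‖ ^ 2 + (l0 - l1) * ⟪u, w⟫ ^ 2 := by
        rw [Finset.sum_add_distrib, ← Finset.mul_sum, b.sum_sq_inner_right]; simp
      _ ≤ _ := by
        have h1 : 0 ≤ l1 := hlam _
        have : ‖w‖ ^ 2 ≤ 1 := pow_le_one₀ (norm_nonneg _) hw
        nlinarith
  rw [hu2]
  have := mul_le_mul_of_nonneg_right hgap (sub_nonneg.mpr ha)
  linarith

/-- Perturbation of the deflation scheme: vectors `a k` that nearly maximize the successively
deflated quadratic forms, with slack of order `δ ^ 2`, are within `O(δ)` of the eigenvectors. -/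
lemma deflation_perturbation {S : E →ₗ[ℝ] E} (hS : S.IsSymmetric) {lam : Fin p → ℝ}
    (hb : ∀ i, S (b i) = lam i • b i)
    (hanti : Antitone lam) (hlam : ∀ i, 0 ≤ lam i) {Δ L N δ : ℝ}
    (hΔ : 0 < Δ) (hL : ∀ i, lam i ≤ L) (hL0 : 0 ≤ L) (hN : 0 ≤ N) (hδ : 0 ≤ δ) {d : ℕ} (hd : d < p)
    (hgap : ∀ (k : ℕ) (hk : k < d), Δ ≤ lam ⟨k, by omega⟩ - lam ⟨k + 1, by omega⟩)
    {a : ℕ → E} (ha : ∀ k < d, ‖a k‖ ≤ 1)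
    (hmax : ∀ (k : ℕ) (hk : k < d),
      ⟪deflSeq a k (b ⟨k, by omega⟩), S (deflSeq a k (b ⟨k, by omega⟩))⟫
        ≤ ⟪deflSeq a k (a k), S (deflSeq a k (a k))⟫ + N * δ ^ 2)
    (k : ℕ) (hk : k < d) :
    ∃ s : ℝ, s ^ 2 = 1 ∧
      ‖s • a k - b ⟨k, by omega⟩‖ ≤ dirConst Δ L N (opConst Δ L N k) * δ := by
  have step : ∀ (k : ℕ) (hk : k < d),
      (∀ x, ‖deflSeq a k x - deflSeq (extZero b) k x‖ ≤ opConst Δ L N k * δ * ‖x‖) →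
      ∃ s : ℝ, s ^ 2 = 1 ∧
        ‖s • a k - b ⟨k, by omega⟩‖ ≤ dirConst Δ L N (opConst Δ L N k) * δ := by
    intro k hk hop
    obtain ⟨s, hs, hsign⟩ : ∃ s : ℝ, s ^ 2 = 1 ∧ 0 ≤ ⟪b ⟨k, by omega⟩, s • a k⟫ := by
      rcases le_total 0 ⟪b ⟨k, by omega⟩, a k⟫ with h | h
      · exact ⟨1, by norm_num, by simpa using h⟩
      · exact ⟨-1, by norm_num, by simpa using h⟩
    refine ⟨s, hs, ?_⟩
    have hw : ‖s • a k‖ ≤ 1 := by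
      have : ‖s‖ = 1 := by
        rw [Real.norm_eq_abs]; exact (sq_eq_sq₀ (abs_nonneg s) zero_le_one).mp (by simpa using hs)
      rw [norm_smul, this, one_mul]; exact ha k hk
    apply le_dirConst hΔ hδ hN
    refine curvature_step S (deflSeq a k) (deflSeq (extZero b) k) hS hL0
      (mul_nonneg (opConst_nonneg _ _ _ _) hδ) hΔ.le (norm_map_le b hS hb hL hlam hL0)
      (norm_deflSeq_le fun j hj => ha j (by omega))
      (norm_deflSeq_le fun j _ => norm_extZero_le b j) hop (b.norm_eq_one _) hw hsign ?_
      (gap_growth b hS hb hanti hlam k (by omega) (hgap k hk) hw)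
    have e : ⟪deflSeq a k (s • a k), S (deflSeq a k (s • a k))⟫
        = s ^ 2 * ⟪deflSeq a k (a k), S (deflSeq a k (a k))⟫ := by
      simp only [map_smul, real_inner_smul_left, real_inner_smul_right]; ring
    rw [e, hs, one_mul]
    exact hmax k hk
  have op : ∀ k ≤ d, ∀ x,
      ‖deflSeq a k x - deflSeq (extZero b) k x‖ ≤ opConst Δ L N k * δ * ‖x‖ := by
    intro k
    induction k with
    | zero => intro _ x; simp [deflSeq, opConst]
    | succ k ih =>
      intro hk x
      have ihk := ih (by omega)
      obtain ⟨s, hs, hsk⟩ := step k (by omega) ihk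
      have hext : extZero b k = b ⟨k, by omega⟩ := by
        unfold extZero; rw [dif_pos (by omega)]
      have h1 := norm_defl_sub_le hs (ha k (by omega)) (norm_extZero_le b k) x
      rw [hext] at h1
      have e : deflSeq a (k + 1) x - deflSeq (extZero b) (k + 1) x
          = deflSeq a k (defl (a k) x - defl (b ⟨k, by omega⟩) x)
            + (deflSeq a k (defl (b ⟨k, by omega⟩) x)
              - deflSeq (extZero b) k (defl (b ⟨k, by omega⟩) x)) := by
        simp only [deflSeq, LinearMap.comp_apply, map_sub, hext]; abel
      rw [e]
      refine (norm_add_le _ _).trans ?_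
      have h2 := norm_deflSeq_le (k := k) (fun j hj => ha j (by omega))
        (defl (a k) x - defl (b ⟨k, by omega⟩) x)
      have h3 := ihk (defl (b ⟨k, by omega⟩) x)
      have h4 := norm_defl_le (b.norm_eq_one ⟨k, by omega⟩).le x
      have h5 := mul_le_mul_of_nonneg_left h4 (mul_nonneg (opConst_nonneg Δ L N k) hδ)
      have h6 := mul_le_mul_of_nonneg_right hsk (norm_nonneg x)
      simp only [opConst]
      linarith
  exact step k hk (op k hk.le)

end

/-! ### Transfer to matrices -/

section
variable {p : ℕ}

open WithLp

lemma l2norm_eq (v : Fin p → ℝ) : l2norm v = ‖toLp 2 v‖ := by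
  simp [l2norm, EuclideanSpace.norm_eq]

lemma dotProduct_eq_inner (v w : Fin p → ℝ) : v ⬝ᵥ w = ⟪toLp 2 v, toLp 2 w⟫ := by
  simp [EuclideanSpace.inner_eq_star_dotProduct, dotProduct_comm]

lemma ofLp_defl (v : Fin p → ℝ) (x : EuclideanSpace ℝ (Fin p)) :
    ofLp (defl (toLp 2 v) x) = ofLp x - (v ⬝ᵥ ofLp x) • v := by
  rw [defl_apply, dotProduct_eq_inner]; simp

lemma deflate_quad (Mh : Matrix (Fin p) (Fin p) ℝ) (vh : ℕ → Fin p → ℝ) (k : ℕ)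
    (x : EuclideanSpace ℝ (Fin p)) :
    ofLp x ⬝ᵥ (deflate Mh vh k *ᵥ ofLp x) =
      ofLp (deflSeq (fun j => toLp 2 (vh j)) k x) ⬝ᵥ
        (Mh *ᵥ ofLp (deflSeq (fun j => toLp 2 (vh j)) k x)) := by
  induction k generalizing x with
  | zero => simp [deflate, deflSeq]
  | succ k ih =>
    simp only [deflSeq, LinearMap.comp_apply]
    rw [← ih, ofLp_defl]
    have h1 : (1 - vecMulVec (vh k) (vh k)) *ᵥ ofLp x
        = ofLp x - (vh k ⬝ᵥ ofLp x) • vh k := by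
      rw [sub_mulVec, one_mulVec, vecMulVec_mulVec]; simp
    have h2 : ofLp x ᵥ* (1 - vecMulVec (vh k) (vh k))
        = ofLp x - (vh k ⬝ᵥ ofLp x) • vh k := by
      rw [vecMul_sub, vecMul_one, vecMul_vecMulVec, dotProduct_comm]
    rw [deflate, ← mulVec_mulVec, ← mulVec_mulVec, dotProduct_mulVec, h1, h2]

lemma l1norm_nonneg (v : Fin p → ℝ) : 0 ≤ l1norm v :=
  Finset.sum_nonneg fun _ _ => abs_nonneg _

/-- Each deflation enlarges the `ℓ1` norm of a vector of the unit ball by at most `τ`. -/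
lemma l1norm_deflSeq_le {vh : ℕ → Fin p → ℝ} {τ : ℝ} (k : ℕ)
    (h1 : ∀ j < k, l1norm (vh j) ≤ τ) (h2 : ∀ j < k, ‖toLp 2 (vh j)‖ ≤ 1)
    (x : EuclideanSpace ℝ (Fin p)) (hx : ‖x‖ ≤ 1) :
    l1norm (ofLp (deflSeq (fun j => toLp 2 (vh j)) k x)) ≤ l1norm (ofLp x) + k * τ := by
  induction k generalizing x with
  | zero => simp [deflSeq]
  | succ k ih =>
    simp only [deflSeq, LinearMap.comp_apply]
    refine (ih (fun j hj => h1 j (by omega)) (fun j hj => h2 j (by omega)) _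
      ((norm_defl_le (h2 k (by omega)) x).trans hx)).trans ?_
    rw [ofLp_defl]
    have ha : |vh k ⬝ᵥ ofLp x| ≤ 1 := by
      rw [dotProduct_eq_inner]
      refine (abs_real_inner_le_norm _ _).trans ?_
      exact mul_le_one₀ (h2 k (by omega)) (norm_nonneg _) hx
    have hs : l1norm (ofLp x - (vh k ⬝ᵥ ofLp x) • vh k)
        ≤ l1norm (ofLp x) + |vh k ⬝ᵥ ofLp x| * l1norm (vh k) := by
      unfold l1norm
      rw [Finset.mul_sum, ← Finset.sum_add_distrib]
      refine Finset.sum_le_sum fun i _ => ?_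
      rw [← abs_mul]
      exact abs_sub _ _
    have hm : |vh k ⬝ᵥ ofLp x| * l1norm (vh k) ≤ 1 * τ :=
      mul_le_mul ha (h1 k (by omega)) (l1norm_nonneg _) zero_le_one
    push_cast
    linarith

lemma abs_entry_le_maxNorm (A : Matrix (Fin p) (Fin p) ℝ) (i j : Fin p) :
    |A i j| ≤ maxNorm A :=
  (le_ciSup (f := fun j => |A i j|) (Set.finite_range _).bddAbove j).trans
    (le_ciSup (f := fun i => ⨆ j, |A i j|) (Set.finite_range _).bddAbove i)

/-- Duality of the entrywise maximum norm with the `ℓ1` norm. -/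
lemma abs_quad_sub_le {Mh M : Matrix (Fin p) (Fin p) ℝ} {ε : ℝ} (h : maxNorm (Mh - M) ≤ ε)
    (x : Fin p → ℝ) : |x ⬝ᵥ (Mh *ᵥ x) - x ⬝ᵥ (M *ᵥ x)| ≤ ε * l1norm x ^ 2 := by
  rw [← dotProduct_sub, ← sub_mulVec]
  simp only [dotProduct, mulVec]
  refine (Finset.abs_sum_le_sum_abs _ _).trans ?_
  calc _ ≤ ∑ i, |x i| * (ε * l1norm x) := by
        refine Finset.sum_le_sum fun i _ => ?_
        rw [abs_mul]
        refine mul_le_mul_of_nonneg_left ?_ (abs_nonneg _)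
        refine (Finset.abs_sum_le_sum_abs _ _).trans ?_
        rw [l1norm, Finset.mul_sum]
        refine Finset.sum_le_sum fun j _ => ?_
        rw [abs_mul]
        exact mul_le_mul_of_nonneg_right ((abs_entry_le_maxNorm _ i j).trans h) (abs_nonneg _)
    _ = ε * l1norm x ^ 2 := by rw [← Finset.sum_mul]; unfold l1norm; ring

end

/-- Theorem 3, PMD consistency: there is a constant `c₀ > 0` depending only
on `d`, `λ₁` and `Δ` such that whenever `τ > τ₀ = max_{k≤d} ‖v_k‖₁` and `‖M̂ − M‖_max ≤ ε`,
the PMD vectors satisfy `sin²Θ(v̂_k, v_k) ≤ c₀ ε τ²` for all `k = 1, …, d`. -/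
theorem stmt_10 (d : ℕ) (lam1 Δ : ℝ) (hΔ : 0 < Δ) :
    ∃ c₀ : ℝ, 0 < c₀ ∧
      ∀ (p : ℕ) (hdp : d < p) (M : Matrix (Fin p) (Fin p) ℝ),
        M.PosSemidef →
        ∀ (v : Fin p → (Fin p → ℝ)) (lam : Fin p → ℝ),
          (∀ i j, dotProduct (v i) (v j) = if i = j then (1 : ℝ) else 0) →
          (∀ i, M.mulVec (v i) = lam i • v i) →
          Antitone lam → (∀ i, 0 ≤ lam i) →
          lam ⟨0, by omega⟩ = lam1 →
          (∀ j : Fin d, Δ ≤ lam ⟨j, by omega⟩ - lam ⟨(j : ℕ) + 1, by omega⟩) →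
          ∀ τ : ℝ, (∀ k : Fin d, l1norm (v ⟨k, by omega⟩) < τ) →
          ∀ ε : ℝ, 0 < ε →
          ∀ Mh : Matrix (Fin p) (Fin p) ℝ, Mh.PosSemidef → maxNorm (Mh - M) ≤ ε →
          ∀ vh : ℕ → (Fin p → ℝ), IsPMD Mh τ d vh →
          ∀ k : Fin d,
            1 - (dotProduct (vh k) (v ⟨k, by omega⟩)) ^ 2 / (l2norm (vh k)) ^ 2 ≤
              c₀ * ε * τ ^ 2 := by
  classical
  set N : ℝ := 2 * ((d : ℝ) + 1) ^ 2 with hN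
  set C : ℕ → ℝ := fun k => dirConst Δ lam1 N (opConst Δ lam1 N k) with hC
  have hC0 : ∀ k, 0 ≤ C k := fun k => Real.sqrt_nonneg _
  refine ⟨∑ k ∈ Finset.range d, C k ^ 2 + 1, ?_, ?_⟩
  · have : 0 ≤ ∑ k ∈ Finset.range d, C k ^ 2 := Finset.sum_nonneg fun k _ => sq_nonneg _
    linarith
  intro p hdp M hM v lam hv hMv hanti hlam hlam1 hgap τ hτ ε hε Mh _ hMh vh hvh k
  have hτ0 : 0 < τ := (l1norm_nonneg _).trans_lt (hτ k)
  set δ := √ε * τ with hδ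
  have hδ2 : δ ^ 2 = ε * τ ^ 2 := by rw [hδ, mul_pow, Real.sq_sqrt hε.le]
  have hon : Orthonormal ℝ (fun i => WithLp.toLp 2 (v i) : Fin p → EuclideanSpace ℝ (Fin p)) := by
    rw [orthonormal_iff_ite]
    intro i j
    rw [← dotProduct_eq_inner, hv]
  have : Nonempty (Fin p) := ⟨⟨0, by omega⟩⟩
  let b := OrthonormalBasis.mk hon
    (hon.linearIndependent.span_eq_top_of_card_eq_finrank (by simp)).ge
  have hbv : ∀ i, b i = WithLp.toLp 2 (v i) := fun i => by simp [b]
  let S := Matrix.toEuclideanLin M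
  have hS : S.IsSymmetric := Matrix.isSymmetric_toEuclideanLin_iff.mpr hM.1
  have hSq : ∀ x : EuclideanSpace ℝ (Fin p), ⟪x, S x⟫ = WithLp.ofLp x ⬝ᵥ (M *ᵥ WithLp.ofLp x) := by
    intro x
    rw [dotProduct_eq_inner]; rfl
  have hb : ∀ i, S (b i) = lam i • b i := by
    intro i
    rw [hbv, ← WithLp.toLp_smul, ← hMv]; rfl
  have h1 : ∀ j < d, l1norm (vh j) ≤ τ := fun j hj => (hvh j hj).1
  have h2 : ∀ j < d, ‖WithLp.toLp 2 (vh j)‖ ≤ 1 := fun j hj => by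
    rw [← l2norm_eq]; exact (hvh j hj).2.1
  have hL0 : 0 ≤ lam1 := hlam1 ▸ hlam _
  -- Replacing `M̂` by `M` costs at most `ε ((d + 1) τ)²` on deflated feasible vectors.
  have noise : ∀ j < d, ∀ x : EuclideanSpace ℝ (Fin p), ‖x‖ ≤ 1 → l1norm (WithLp.ofLp x) ≤ τ →
      |WithLp.ofLp x ⬝ᵥ (deflate Mh vh j *ᵥ WithLp.ofLp x)
        - ⟪deflSeq (fun j => WithLp.toLp 2 (vh j)) j x,
            S (deflSeq (fun j => WithLp.toLp 2 (vh j)) j x)⟫|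
        ≤ ((d : ℝ) + 1) ^ 2 * δ ^ 2 := by
    intro j hj x hx hx1
    rw [deflate_quad, hSq, hδ2]
    refine (abs_quad_sub_le hMh _).trans ?_
    have h3 := l1norm_deflSeq_le j (fun i hi => h1 i (by omega)) (fun i hi => h2 i (by omega)) x hx
    have hjd : (j : ℝ) * τ ≤ d * τ := by gcongr
    calc _ ≤ ε * (((d : ℝ) + 1) * τ) ^ 2 := by
          have := l1norm_nonneg
            (WithLp.ofLp (deflSeq (fun j => WithLp.toLp 2 (vh j)) j x))
          gcongr
          linarith
      _ = _ := by ring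
  obtain ⟨s, _, hs⟩ := deflation_perturbation b hS hb hanti hlam (L := lam1) (N := N) (δ := δ)
    hΔ (fun i => hlam1 ▸ hanti (by simp [Fin.le_def])) hL0 (by positivity) (by positivity) hdp
    (fun j hj => hgap ⟨j, hj⟩) (a := fun j => WithLp.toLp 2 (vh j)) h2
    (fun j hj => by
      have e : WithLp.ofLp (b ⟨j, by omega⟩) = v ⟨j, by omega⟩ := by rw [hbv]
      have n1 := noise j hj (b ⟨j, by omega⟩) (b.norm_eq_one _).le (by
        rw [e]; exact (hτ ⟨j, hj⟩).le)
      have n2 := noise j hj (WithLp.toLp 2 (vh j)) (h2 j hj) (h1 j hj)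
      have n3 := (hvh j hj).2.2 (WithLp.ofLp (b ⟨j, by omega⟩)) (by
        rw [e]; exact (hτ ⟨j, hj⟩).le) (by rw [l2norm_eq]; exact (b.norm_eq_one _).le)
      rw [abs_le] at n1 n2
      rw [hN]
      linarith [n1.1, n2.2]) k k.2
  have hfin := sin_sq_le_s10 (a := WithLp.toLp 2 (vh k)) (b.norm_eq_one ⟨k, by omega⟩) s
  rw [hbv, ← dotProduct_eq_inner, ← l2norm_eq, ← hbv] at hfin
  refine hfin.trans ?_
  calc _ ≤ (C k * δ) ^ 2 := by gcongr
    _ = C k ^ 2 * δ ^ 2 := by ring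
    _ ≤ (∑ k ∈ Finset.range d, C k ^ 2 + 1) * δ ^ 2 := by
      have := Finset.single_le_sum (f := fun k => C k ^ 2) (fun k _ => sq_nonneg _)
        (Finset.mem_range.mpr k.2)
      refine mul_le_mul_of_nonneg_right ?_ (sq_nonneg _)
      linarith
    _ = _ := by rw [hδ2]; ring
end
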